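/- Let S ⊆ ℤ² be a finite set of lattice points and let P = convexHull ℝ S ⊆ ℝ² have nonempty interior (a convex lattice polygon). Then for every real number y the parametrized Pick formula holds: (1+y)²·I + (1+y)·(B − v) + v = (1+y)²·A + ((1−y²)/2)·B + ((1+y)² − (1+y)·v + v), where A is the Lebesgue measure of P, I is the number of points of ℤ² in the interior of P, B is the number of points of ℤ² in the frontier of P, and v is the number of extreme points of P. -/

import Mathlib

/-! Both sides are linear in `v` with the same coefficient, so after cancelling `v` the identity is
`(1 + y) ^ 2` times Pick's formula `I + B / 2 = A + 1`; that formula is proved column by column.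

Write `P` as `{(x, y) | a ≤ x ≤ b, f x ≤ y ≤ g x}` with `f` convex, `g` concave and `a, b` integers.
Put `lev t = (⌊t⌋ + ⌈t⌉) / 2`. If `g` is affine between two lattice points of its graph, over
`p` and `q`, the point reflection in the midpoint of that segment preserves the lattice, and
`lev (m - t) = m - lev t` for integers `m`; hence the trapezoidal sum of `lev ∘ g` over the integers
in `[p, q]` is exactly `∫ g` (`trapezoid_of_affine`). As `g` is the upper boundary of a hull of
lattice points, `[a, b]` splits into such pieces: if `g` is not its chord between two lattice points
of the graph, the lattice point of `S` highest above the chord is again on the graph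
(`trapezoid_of_hull`). The same holds for `-f`.

So `A` is the trapezoidal sum of `lev (g x) - lev (f x)`. For `a < x < b` this term is the number of
interior lattice points in the column over `x` plus half the number of boundary ones. Over `x = a`
and `x = b`, where `f` and `g` are integers, all `g x - f x + 1` lattice points are boundary points,
so half their number exceeds the half-weighted term by `1 / 2`; this accounts for the `+ 1`. -/

open MeasureTheory Set

/-- The embedding of the lattice `ℤ²` into `ℝ²`. -/
noncomputable def latticeMap : (Fin 2 → ℤ) → (Fin 2 → ℝ) := fun n j => (n j : ℝ)

/-! ### The symmetrized floor and trapezoidal sums -/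

/-- The symmetrized floor `(⌊t⌋ + ⌈t⌉) / 2`: up to a constant, it counts the integers below `t`,
with `t` itself counted one half when it is an integer. -/
noncomputable def lev (t : ℝ) : ℝ := ((⌊t⌋ : ℝ) + (⌈t⌉ : ℝ)) / 2

lemma lev_int (n : ℤ) : lev n = n := by
  simp [lev]

lemma lev_neg (t : ℝ) : lev (-t) = -lev t := by
  simp only [lev, Int.floor_neg, Int.ceil_neg]; push_cast; ring

lemma lev_int_sub (n : ℤ) (t : ℝ) : lev (n - t) = n - lev t := by
  simp only [lev, sub_eq_add_neg, Int.floor_intCast_add, Int.ceil_intCast_add, Int.floor_neg,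
    Int.ceil_neg]
  push_cast; ring

/-- The integral of `g` over `[p, q]` exists and equals the trapezoidal sum of `lev ∘ g` over the
integers of `[p, q]`, the two ends having weight one half. -/
def Trapezoid (g : ℝ → ℝ) (p q : ℤ) : Prop :=
  IntervalIntegrable g volume p q ∧
    ∫ x in (p : ℝ)..q, g x = ∑ x ∈ Finset.Ioo p q, lev (g x) + (lev (g p) + lev (g q)) / 2

lemma Trapezoid.trans {g : ℝ → ℝ} {p r q : ℤ} (hpr : p < r) (hrq : r < q)
    (h₁ : Trapezoid g p r) (h₂ : Trapezoid g r q) : Trapezoid g p q := by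
  refine ⟨h₁.1.trans h₂.1, ?_⟩
  have hset : Finset.Ioo p q = insert r (Finset.Ioo p r ∪ Finset.Ioo r q) := by
    ext x; simp only [Finset.mem_insert, Finset.mem_union, Finset.mem_Ioo]; omega
  rw [← intervalIntegral.integral_add_adjacent_intervals h₁.1 h₂.1, h₁.2, h₂.2, hset,
    Finset.sum_insert (by simp), Finset.sum_union]
  · ring
  · rw [Finset.disjoint_left]; intro x; simp only [Finset.mem_Ioo]; omega

/-- An affine function with integer values at `p` and `q`: the reflection `x ↦ p + q - x` pairs the
terms of the trapezoidal sum so that the rounding errors cancel. -/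
lemma trapezoid_of_affine {g : ℝ → ℝ} {p q : ℤ} (hpq : p < q) (α β : ℝ) (u w : ℤ)
    (hu : α * p + β = u) (hw : α * q + β = w)
    (hg : ∀ x ∈ Icc (p : ℝ) q, g x = α * x + β) : Trapezoid g p q := by
  have hpq' : (p : ℝ) < q := by exact_mod_cast hpq
  have huIcc : uIcc (p : ℝ) q = Icc (p : ℝ) q := uIcc_of_le hpq'.le
  have hcont : Continuous fun x : ℝ => α * x + β := by fun_prop
  have hgp : g p = u := by rw [hg p ⟨le_rfl, hpq'.le⟩, hu]
  have hgq : g q = w := by rw [hg q ⟨hpq'.le, le_rfl⟩, hw]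
  constructor
  · refine (ContinuousOn.congr hcont.continuousOn ?_).intervalIntegrable
    intro x hx
    exact hg x (huIcc ▸ hx)
  · have hint : ∫ x in (p : ℝ)..q, g x = (q - p) * (u + w) / 2 := by
      rw [intervalIntegral.integral_congr (g := fun x => α * x + β)
        (fun x hx => hg x (huIcc ▸ hx))]
      rw [intervalIntegral.integral_add (Continuous.intervalIntegrable (by fun_prop) _ _)
        (Continuous.intervalIntegrable (by fun_prop) _ _), intervalIntegral.integral_const_mul,
        integral_id, intervalIntegral.integral_const, smul_eq_mul, ← hu, ← hw]
      ring
    have hrefl : ∑ x ∈ Finset.Ioo p q, lev (g x)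
        = ∑ x ∈ Finset.Ioo p q, lev (g ((p + q - x : ℤ) : ℝ)) := by
      refine Finset.sum_nbij' (fun x => p + q - x) (fun x => p + q - x) ?_ ?_ ?_ ?_ ?_
      · intro x; simp only [Finset.mem_Ioo]; omega
      · intro x; simp only [Finset.mem_Ioo]; omega
      · intro x _; ring
      · intro x _; ring
      · intro x _; congr 3; ring
    have hpair : ∀ x ∈ Finset.Ioo p q,
        lev (g x) + lev (g ((p + q - x : ℤ) : ℝ)) = u + w := by
      intro x hx
      rw [Finset.mem_Ioo] at hx
      have h1 : (p : ℝ) ≤ x := by exact_mod_cast hx.1.le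
      have h2 : (x : ℝ) ≤ q := by exact_mod_cast hx.2.le
      have h3 : g ((p + q - x : ℤ) : ℝ) = ((u + w : ℤ) : ℝ) - g x := by
        rw [hg x ⟨h1, h2⟩, hg _ (by push_cast; constructor <;> linarith)]
        push_cast
        rw [← hu, ← hw]; ring
      rw [h3, lev_int_sub]; push_cast; ring
    have hsum := Finset.sum_congr rfl hpair
    rw [Finset.sum_add_distrib, ← hrefl, Finset.sum_const, Int.card_Ioo, nsmul_eq_mul] at hsum
    have hcard : (((q - p - 1).toNat : ℕ) : ℝ) = q - p - 1 := by
      have : (((q - p - 1).toNat : ℕ) : ℤ) = q - p - 1 := Int.toNat_of_nonneg (by omega)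
      exact_mod_cast this
    rw [hcard] at hsum
    rw [hint, hgp, hgq, lev_int, lev_int]
    linarith

/-- The trapezoidal formula, between two lattice points of its graph, for the concave function `g`
whose graph is the upper boundary of the hull of lattice points `(X s, Y s)`. The hypothesis `hmaj`
says that `g` lies below every line lying above all the points. The induction is on `q - p`. -/
lemma trapezoid_of_hull {ι : Type*} (S : Finset ι) (X Y : ι → ℤ) (g : ℝ → ℝ) (a b : ℤ)
    (hconc : ConcaveOn ℝ (Icc (a : ℝ) b) g)
    (hS : ∀ s ∈ S, (X s : ℝ) ∈ Icc (a : ℝ) b ∧ (Y s : ℝ) ≤ g (X s))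
    (hmaj : ∀ α β : ℝ, (∀ s ∈ S, (Y s : ℝ) ≤ α * X s + β) →
      ∀ x ∈ Icc (a : ℝ) b, g x ≤ α * x + β) :
    ∀ (n : ℕ) (p q u w : ℤ), a ≤ p → p < q → q ≤ b → (q - p).toNat ≤ n →
      g p = u → g q = w → Trapezoid g p q := by
  intro n
  induction n with
  | zero => intro p q u w _ hpq _ hn; omega
  | succ n ih =>
    intro p q u w hap hpq hqb hn hu hw
    have hpq' : (p : ℝ) < q := by exact_mod_cast hpq
    have hap' : (a : ℝ) ≤ p := by exact_mod_cast hap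
    have hqb' : (q : ℝ) ≤ b := by exact_mod_cast hqb
    have hpm : (p : ℝ) ∈ Icc (a : ℝ) b := ⟨hap', by linarith⟩
    have hqm : (q : ℝ) ∈ Icc (a : ℝ) b := ⟨by linarith, hqb'⟩
    -- the chord of the graph over `[p, q]`
    obtain ⟨α, β, hαp, hαq⟩ : ∃ α β : ℝ, α * p + β = u ∧ α * q + β = w := by
      refine ⟨(w - u) / (q - p), u - (w - u) / (q - p) * p, by ring, ?_⟩
      have : (q : ℝ) - p ≠ 0 := by linarith
      field_simp; ring
    by_cases h : ∀ s ∈ S, (Y s : ℝ) ≤ α * X s + β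
    · refine trapezoid_of_affine hpq α β u w hαp hαq fun x hx => ?_
      refine le_antisymm (hmaj α β h x ⟨by linarith [hx.1], by linarith [hx.2]⟩) ?_
      obtain ⟨c, d, hc, hd, hcd, hx⟩ : ∃ c d : ℝ, 0 ≤ c ∧ 0 ≤ d ∧ c + d = 1 ∧
          c • (p : ℝ) + d • (q : ℝ) = x := by
        rw [← segment_eq_Icc hpq'.le] at hx
        exact hx
      have := hconc.2 hpm hqm hc hd hcd
      rw [hx, hu, hw, ← hαp, ← hαq] at this
      simp only [smul_eq_mul] at this hx
      calc α * x + β = α * (c * p + d * q) + (c + d) * β := by rw [hx, hcd, one_mul]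
        _ = c * (α * p + β) + d * (α * q + β) := by ring
        _ ≤ g x := this
    · push Not at h
      obtain ⟨s₀, hs₀, habove⟩ := h
      -- the point highest above the chord lies on the graph, strictly between `p` and `q`
      obtain ⟨s, hs, hmax⟩ := S.exists_max_image (fun s => (Y s : ℝ) - (α * X s + β)) ⟨s₀, hs₀⟩
      have hpos : 0 < (Y s : ℝ) - (α * X s + β) := by linarith [hmax s₀ hs₀]
      obtain ⟨hXm, hYg⟩ := hS s hs
      have hgs : g (X s) = Y s := by
        refine le_antisymm ?_ hYg
        have := hmaj α (β + ((Y s : ℝ) - (α * X s + β)))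
          (fun t ht => by linarith [hmax t ht]) (X s) hXm
        linarith
      have hXp : p < X s := by
        by_contra hle
        rcases (not_lt.mp hle).lt_or_eq with hlt | heq
        · have hlt' : (X s : ℝ) < p := by exact_mod_cast hlt
          have := hconc.slope_anti_adjacent hXm hqm hlt' hpq'
          rw [div_le_div_iff₀ (by linarith) (by linarith), hu, hw, hgs, ← hαp, ← hαq] at this
          nlinarith
        · rw [heq, hu] at hgs
          rw [heq] at hpos
          linarith
      have hXq : X s < q := by
        by_contra hle
        rcases (not_lt.mp hle).lt_or_eq with hlt | heq
        · have hlt' : (q : ℝ) < X s := by exact_mod_cast hlt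
          have := hconc.slope_anti_adjacent hpm hXm hpq' hlt'
          rw [div_le_div_iff₀ (by linarith) (by linarith), hu, hw, hgs, ← hαp, ← hαq] at this
          nlinarith
        · rw [← heq, hw] at hgs
          rw [← heq] at hpos
          linarith
      exact (ih p (X s) u (Y s) hap hXp (by omega) (by omega) hu hgs).trans hXp hXq
        (ih (X s) q (Y s) w (by omega) hXq hqb (by omega) hgs hw)

/-! ### Lattice polygons as regions between two graphs -/

lemma vec_eta (p : Fin 2 → ℝ) : ![p 0, p 1] = p := by
  ext i; fin_cases i <;> rfl

/-- With `ε, δ = ±1`, the point `s` is an end of one of the two vertical extreme slices of the hull: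
`ε = 1` is the left slice and `ε = -1` the right one, `δ = 1` the upper end and `δ = -1` the lower
one. Lexicographic half-planes are convex, so minimality over `S` passes to the hull. -/
lemma exists_lex_extreme (S : Finset (Fin 2 → ℤ)) (hS : S.Nonempty) (ε δ : ℤ) :
    ∃ s ∈ S, ∀ p ∈ convexHull ℝ (latticeMap '' (S : Set (Fin 2 → ℤ))),
      (ε * s 0 : ℝ) < ε * p 0 ∨ ((ε * p 0 : ℝ) = ε * s 0 ∧ (δ * p 1 : ℝ) ≤ δ * s 1) := by
  obtain ⟨s₁, hs₁, hmin⟩ := S.exists_min_image (fun s => ε * s 0) hS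
  obtain ⟨s, hs, hmax⟩ := (S.filter fun s => ε * s 0 = ε * s₁ 0).exists_max_image
    (fun s => δ * s 1) ⟨s₁, by simp [hs₁]⟩
  rw [Finset.mem_filter] at hs
  refine ⟨s, hs.1, ?_⟩
  refine convexHull_min (t := {p : Fin 2 → ℝ | (ε * s 0 : ℝ) < ε * p 0 ∨
    ((ε * p 0 : ℝ) = ε * s 0 ∧ (δ * p 1 : ℝ) ≤ δ * s 1)}) ?_ ?_
  · rintro _ ⟨t, ht, rfl⟩
    have h1 := hmin t ht
    rcases h1.lt_or_eq with h | h
    · left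
      show (ε * s 0 : ℝ) < ε * t 0
      have : ε * s 0 < ε * t 0 := by rw [hs.2]; exact h
      exact_mod_cast this
    · right
      have h2 := hmax t (Finset.mem_filter.mpr ⟨ht, h.symm⟩)
      have h3 : ε * t 0 = ε * s 0 := by rw [hs.2]; exact h.symm
      show (ε * t 0 : ℝ) = ε * s 0 ∧ (δ * t 1 : ℝ) ≤ δ * s 1
      exact ⟨by exact_mod_cast h3, by exact_mod_cast h2⟩
  · intro p hp q hq c d hc hd hcd
    simp only [mem_ofPred_eq, Pi.add_apply, Pi.smul_apply, smul_eq_mul] at hp hq ⊢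
    obtain rfl : c = 1 - d := by linarith
    rcases hp with hp | ⟨hp, hp'⟩ <;> rcases hq with hq | ⟨hq, hq'⟩
    · left
      rcases hd.lt_or_eq with h | h
      · nlinarith
      · rw [← h]; linarith
    · rcases hc.lt_or_eq with h | h
      · left; nlinarith
      · right
        obtain rfl : d = 1 := by linarith
        constructor <;> linarith
    · rcases hd.lt_or_eq with h | h
      · left; nlinarith
      · right
        rw [← h]
        constructor <;> linarith
    · right
      constructor
      · linear_combination (1 - d) * hp + d * hq
      · nlinarith

lemma linear_le_of_mem_hull (S : Finset (Fin 2 → ℤ)) (α β γ : ℝ)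
    (h : ∀ s ∈ S, α * s 0 + β * s 1 ≤ γ) {p : Fin 2 → ℝ}
    (hp : p ∈ convexHull ℝ (latticeMap '' (S : Set (Fin 2 → ℤ)))) : α * p 0 + β * p 1 ≤ γ := by
  refine convexHull_min (t := {p : Fin 2 → ℝ | α * p 0 + β * p 1 ≤ γ}) ?_ ?_ hp
  · rintro _ ⟨t, ht, rfl⟩
    exact h t ht
  · intro p hp q hq c d hc hd hcd
    simp only [mem_ofPred_eq, Pi.add_apply, Pi.smul_apply, smul_eq_mul] at hp hq ⊢
    obtain rfl : c = 1 - d := by linarith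
    nlinarith

lemma exists_slice_bounds {P : Set (Fin 2 → ℝ)} (hP : IsCompact P) {p : Fin 2 → ℝ} (hp : p ∈ P) :
    ∃ lo hi : ℝ, ![p 0, lo] ∈ P ∧ ![p 0, hi] ∈ P ∧ ∀ y, ![p 0, y] ∈ P → lo ≤ y ∧ y ≤ hi := by
  have hcl : IsClosed {r : Fin 2 → ℝ | r 0 = p 0} :=
    isClosed_eq (continuous_apply 0) continuous_const
  have hK := hP.inter_right hcl
  have hne : (P ∩ {r : Fin 2 → ℝ | r 0 = p 0}).Nonempty := ⟨p, hp, rfl⟩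
  obtain ⟨l, ⟨hl, hl0⟩, hlm⟩ := hK.exists_isMinOn hne (continuous_apply 1).continuousOn
  obtain ⟨r, ⟨hr, hr0⟩, hrm⟩ := hK.exists_isMaxOn hne (continuous_apply 1).continuousOn
  simp only [mem_ofPred_eq] at hl0 hr0
  refine ⟨l 1, r 1, ?_, ?_, fun y hy => ⟨?_, ?_⟩⟩
  · rw [← hl0, vec_eta]; exact hl
  · rw [← hr0, vec_eta]; exact hr
  · exact hlm (show ![p 0, y] ∈ _ from ⟨hy, rfl⟩)
  · exact hrm (show ![p 0, y] ∈ _ from ⟨hy, rfl⟩)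

/-- If `P` is the closed region between the graphs of the convex `f` and the concave `g`, then the
interior of `P` is the open region; the latter is open because `f` and `g` are continuous on
`Ioo a b`. -/
lemma mem_interior_region {P : Set (Fin 2 → ℝ)} {f g : ℝ → ℝ} {a b : ℝ}
    (hP : ∀ x y, ![x, y] ∈ P ↔ x ∈ Icc a b ∧ f x ≤ y ∧ y ≤ g x)
    (hf : ConvexOn ℝ (Icc a b) f) (hg : ConcaveOn ℝ (Icc a b) g) (p : Fin 2 → ℝ) :
    p ∈ interior P ↔ p 0 ∈ Ioo a b ∧ f (p 0) < p 1 ∧ p 1 < g (p 0) := by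
  constructor
  · intro hp
    -- moving an interior point slightly in any direction `v` keeps it in `P`
    have hmove : ∀ v : Fin 2 → ℝ, ∃ t : ℝ, 0 < t ∧ p + t • v ∈ P := by
      intro v
      have hc : Continuous fun t : ℝ => p + t • v := by fun_prop
      have hev : ∀ᶠ t in nhds (0 : ℝ), p + t • v ∈ P :=
        hc.continuousAt.eventually (by simpa using mem_interior_iff_mem_nhds.mp hp)
      obtain ⟨t, ht, ht'⟩ := ((hev.filter_mono nhdsWithin_le_nhds).and
        (self_mem_nhdsWithin : Ioi (0 : ℝ) ∈ nhdsWithin 0 (Ioi 0))).exists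
      exact ⟨t, ht', ht⟩
    have key : ∀ c d : ℝ, ∃ t : ℝ, 0 < t ∧ (p 0 + t * c ∈ Icc a b ∧
        f (p 0 + t * c) ≤ p 1 + t * d ∧ p 1 + t * d ≤ g (p 0 + t * c)) := by
      intro c d
      obtain ⟨t, ht, h⟩ := hmove ![c, d]
      rw [← vec_eta (p + t • ![c, d]), hP] at h
      exact ⟨t, ht, by simpa using h⟩
    obtain ⟨t₁, h₁, h₁', -⟩ := key 1 0
    obtain ⟨t₂, h₂, h₂', -⟩ := key (-1) 0
    obtain ⟨t₃, h₃, -, -, h₃'⟩ := key 0 1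
    obtain ⟨t₄, h₄, -, h₄', -⟩ := key 0 (-1)
    simp only [mul_zero, add_zero] at h₃' h₄'
    exact ⟨⟨by linarith [h₂'.1], by linarith [h₁'.2]⟩, by linarith, by linarith⟩
  · rintro ⟨hx, hy, hy'⟩
    have hfc : ContinuousAt f (p 0) := by
      have := hf.continuousOn_interior
      rw [interior_Icc] at this
      exact this.continuousAt (isOpen_Ioo.mem_nhds hx)
    have hgc : ContinuousAt g (p 0) := by
      have := hg.continuousOn_interior
      rw [interior_Icc] at this
      exact this.continuousAt (isOpen_Ioo.mem_nhds hx)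
    have c0 : ContinuousAt (fun q : Fin 2 → ℝ => q 0) p := (continuous_apply 0).continuousAt
    have c1 : ContinuousAt (fun q : Fin 2 → ℝ => q 1) p := (continuous_apply 1).continuousAt
    have hfc' : ContinuousAt (fun q : Fin 2 → ℝ => f (q 0)) p :=
      ContinuousAt.comp (f := fun q : Fin 2 → ℝ => q 0) hfc c0
    have hgc' : ContinuousAt (fun q : Fin 2 → ℝ => g (q 0)) p :=
      ContinuousAt.comp (f := fun q : Fin 2 → ℝ => q 0) hgc c0
    rw [mem_interior_iff_mem_nhds]
    filter_upwards [c0.eventually (isOpen_Ioo.mem_nhds hx), hfc'.eventually_lt c1 hy,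
      c1.eventually_lt hgc' hy'] with q h0 h1 h2
    rw [← vec_eta q, hP]
    exact ⟨⟨h0.1.le, h0.2.le⟩, h1.le, h2.le⟩

lemma ncard_columns (T : Set (Fin 2 → ℤ)) (s : Finset ℤ) (c : ℤ → Finset ℤ)
    (hT : ∀ n : Fin 2 → ℤ, n ∈ T ↔ n 0 ∈ s ∧ n 1 ∈ c (n 0)) :
    T.Finite ∧ T.ncard = ∑ x ∈ s, (c x).card := by
  classical
  have himg : T = (((s.sigma c).image fun z : (_ : ℤ) × ℤ => (![z.1, z.2] : Fin 2 → ℤ) :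
      Finset (Fin 2 → ℤ)) : Set (Fin 2 → ℤ)) := by
    ext n
    rw [hT, Finset.mem_coe, Finset.mem_image]
    constructor
    · rintro ⟨h0, h1⟩
      refine ⟨⟨n 0, n 1⟩, by simp [h0, h1], ?_⟩
      ext i; fin_cases i <;> rfl
    · rintro ⟨z, hz, rfl⟩
      simpa using hz
  refine ⟨himg ▸ Finset.finite_toSet _, ?_⟩
  rw [himg, Set.ncard_coe_finset, Finset.card_image_of_injective, Finset.card_sigma]
  rintro ⟨x, y⟩ ⟨x', y'⟩ h
  have h0 := congrFun h 0
  have h1 := congrFun h 1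
  simp only [Matrix.cons_val_zero, Matrix.cons_val_one] at h0 h1
  subst h0; subst h1; rfl

/-! ### Pick's formula -/

/-- Pick's formula `I + B / 2 = A + 1` for convex lattice polygons. -/
theorem pick_formula (S : Finset (Fin 2 → ℤ)) (P : Set (Fin 2 → ℝ))
    (hP : P = convexHull ℝ (latticeMap '' (S : Set (Fin 2 → ℤ))))
    (hne : (interior P).Nonempty) :
    ({n : Fin 2 → ℤ | latticeMap n ∈ interior P}.ncard : ℝ)
      + ({n : Fin 2 → ℤ | latticeMap n ∈ frontier P}.ncard : ℝ) / 2
      = (volume P).toReal + 1 := by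
  have hPc : IsCompact P := by
    rw [hP]; exact ((S.finite_toSet).image _).isCompact_convexHull (𝕜 := ℝ)
  have hPconv : Convex ℝ P := by rw [hP]; exact convex_convexHull _ _
  have hSP : ∀ s ∈ S, ![(s 0 : ℝ), (s 1 : ℝ)] ∈ P := by
    intro s hs
    rw [hP]
    refine subset_convexHull ℝ _ ⟨s, hs, ?_⟩
    ext i; fin_cases i <;> rfl
  have hSne : S.Nonempty := by
    rw [Finset.nonempty_iff_ne_empty]
    rintro rfl
    simp [hP] at hne
  have hcomb : ∀ {x y x' y' c d : ℝ}, ![x, y] ∈ P → ![x', y'] ∈ P → 0 ≤ c → 0 ≤ d → c + d = 1 →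
      ![c * x + d * x', c * y + d * y'] ∈ P := by
    intro x y x' y' c d h h' hc hd hcd
    have := hPconv h h' hc hd hcd
    convert this using 1
    ext i; fin_cases i <;> simp
  -- `s₁`, `s₂` are the upper and lower ends of the leftmost slice, `s₃`, `s₄` of the rightmost one
  obtain ⟨s₁, hs₁, h₁⟩ := exists_lex_extreme S hSne 1 1
  obtain ⟨s₂, hs₂, h₂⟩ := exists_lex_extreme S hSne 1 (-1)
  obtain ⟨s₃, hs₃, h₃⟩ := exists_lex_extreme S hSne (-1) 1
  obtain ⟨s₄, hs₄, h₄⟩ := exists_lex_extreme S hSne (-1) (-1)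
  rw [← hP] at h₁ h₂ h₃ h₄
  simp only [Int.cast_one, Int.cast_neg, one_mul, neg_mul, neg_lt_neg_iff, neg_inj,
    neg_le_neg_iff] at h₁ h₂ h₃ h₄
  set a : ℤ := s₁ 0 with ha
  set b : ℤ := s₃ 0 with hb
  have hs₂a : (s₂ 0 : ℝ) = a := by
    refine le_antisymm ?_ ?_
    · rcases h₂ _ (hSP s₁ hs₁) with h | h
      · exact h.le
      · exact h.1.ge
    · rcases h₁ _ (hSP s₂ hs₂) with h | h
      · exact h.le
      · exact h.1.ge
  have hs₄b : (s₄ 0 : ℝ) = b := by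
    refine le_antisymm ?_ ?_
    · rcases h₃ _ (hSP s₄ hs₄) with h | h
      · exact h.le
      · exact h.1.le
    · rcases h₄ _ (hSP s₃ hs₃) with h | h
      · exact h.le
      · exact h.1.le
  have hproj : ∀ {x y : ℝ}, ![x, y] ∈ P → x ∈ Icc (a : ℝ) b := by
    intro x y h
    constructor
    · rcases h₁ _ h with h | h
      · exact h.le
      · exact h.1.ge
    · rcases h₃ _ h with h | h
      · exact h.le
      · exact h.1.le
  have hab0 : (a : ℝ) ≤ b := (hproj (hSP s₁ hs₁)).2
  have hslice : ∀ x : ℝ, ∃ lo hi : ℝ, x ∈ Icc (a : ℝ) b →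
      ![x, lo] ∈ P ∧ ![x, hi] ∈ P ∧ ∀ y, ![x, y] ∈ P → lo ≤ y ∧ y ≤ hi := by
    intro x
    by_cases hx : x ∈ Icc (a : ℝ) b
    · have hx' := hx
      rw [← segment_eq_Icc hab0] at hx'
      obtain ⟨c, d, hc, hd, hcd, rfl⟩ := hx'
      obtain ⟨lo, hi, h⟩ := exists_slice_bounds hPc
        (hcomb (hSP s₁ hs₁) (hSP s₃ hs₃) hc hd hcd)
      exact ⟨lo, hi, fun _ => h⟩
    · exact ⟨0, 0, fun h => absurd h hx⟩
  choose f g hfg using hslice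
  have hmem : ∀ x y, ![x, y] ∈ P ↔ x ∈ Icc (a : ℝ) b ∧ f x ≤ y ∧ y ≤ g x := by
    intro x y
    constructor
    · intro h
      exact ⟨hproj h, (hfg x (hproj h)).2.2 y h⟩
    · rintro ⟨hx, hy⟩
      obtain ⟨hlo, hhi, -⟩ := hfg x hx
      have hy' : y ∈ Icc (f x) (g x) := hy
      rw [← segment_eq_Icc (hy.1.trans hy.2)] at hy'
      obtain ⟨c, d, hc, hd, hcd, rfl⟩ := hy'
      have := hcomb hlo hhi hc hd hcd
      rwa [← add_mul, hcd, one_mul] at this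
  have hle : ∀ x ∈ Icc (a : ℝ) b, f x ≤ g x := fun x hx =>
    ((hmem x (f x)).mp (hfg x hx).1).2.2
  have hgconc : ConcaveOn ℝ (Icc (a : ℝ) b) g := by
    refine ⟨convex_Icc _ _, fun x hx x' hx' c d hc hd hcd => ?_⟩
    exact ((hmem _ _).mp (hcomb (hfg x hx).2.1 (hfg x' hx').2.1 hc hd hcd)).2.2
  have hfconv : ConvexOn ℝ (Icc (a : ℝ) b) f := by
    refine ⟨convex_Icc _ _, fun x hx x' hx' c d hc hd hcd => ?_⟩
    exact ((hmem _ _).mp (hcomb (hfg x hx).1 (hfg x' hx').1 hc hd hcd)).2.1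
  have hint := mem_interior_region hmem hfconv hgconc
  obtain ⟨p₀, hp₀⟩ := hne
  rw [hint] at hp₀
  obtain ⟨hp₀x, hp₀f, hp₀g⟩ := hp₀
  have habR : (a : ℝ) < b := hp₀x.1.trans hp₀x.2
  have hab : a < b := by exact_mod_cast habR
  have haI : (a : ℝ) ∈ Icc (a : ℝ) b := ⟨le_rfl, hab0⟩
  have hbI : (b : ℝ) ∈ Icc (a : ℝ) b := ⟨hab0, le_rfl⟩
  -- `g - f` is concave, nonnegative, and positive at `p₀ 0`
  have hlt : ∀ x ∈ Ioo (a : ℝ) b, f x < g x := by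
    have hpull : ∀ e ∈ Icc (a : ℝ) b, ∀ x ∈ segment ℝ (p₀ 0) e, x ≠ e → f x < g x := by
      rintro e he x ⟨c, d, hc, hd, hcd, rfl⟩ hxe
      have hc' : 0 < c := by
        refine lt_of_le_of_ne hc ?_
        rintro rfl
        obtain rfl : d = 1 := by linarith
        simp at hxe
      have hp₀I : p₀ 0 ∈ Icc (a : ℝ) b := Ioo_subset_Icc_self hp₀x
      have e1 := hgconc.2 hp₀I he hc hd hcd
      have e2 := hfconv.2 hp₀I he hc hd hcd
      simp only [smul_eq_mul] at e1 e2 ⊢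
      have e3 := mul_le_mul_of_nonneg_left (hle e he) hd
      have e4 := mul_lt_mul_of_pos_left (hp₀f.trans hp₀g) hc'
      linarith
    intro x hx
    rcases le_total x (p₀ 0) with h | h
    · refine hpull a haI x ?_ hx.1.ne'
      rw [segment_symm, segment_eq_Icc hp₀x.1.le]
      exact ⟨hx.1.le, h⟩
    · refine hpull b hbI x ?_ hx.2.ne
      rw [segment_eq_Icc hp₀x.2.le]
      exact ⟨h, hx.2.le⟩
  have hga : g a = s₁ 1 := by
    refine le_antisymm ?_ ((hmem _ _).mp (hSP s₁ hs₁)).2.2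
    rcases h₁ _ (hfg a haI).2.1 with h | h
    · exact absurd h (lt_irrefl _)
    · exact h.2
  have hfa : f a = s₂ 1 := by
    refine le_antisymm ?_ ?_
    · have := ((hmem _ _).mp (hSP s₂ hs₂)).2.1
      rwa [hs₂a] at this
    · rcases h₂ _ (hfg a haI).1 with h | h
      · rw [hs₂a] at h
        exact absurd h (lt_irrefl _)
      · exact h.2
  have hgb : g b = s₃ 1 := by
    refine le_antisymm ?_ ((hmem _ _).mp (hSP s₃ hs₃)).2.2
    rcases h₃ _ (hfg b hbI).2.1 with h | h
    · exact absurd h (lt_irrefl _)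
    · exact h.2
  have hfb : f b = s₄ 1 := by
    refine le_antisymm ?_ ?_
    · have := ((hmem _ _).mp (hSP s₄ hs₄)).2.1
      rwa [hs₄b] at this
    · rcases h₄ _ (hfg b hbI).1 with h | h
      · rw [hs₄b] at h
        exact absurd h (lt_irrefl _)
      · exact h.2
  have hTg : Trapezoid g a b := by
    refine trapezoid_of_hull S (fun s => s 0) (fun s => s 1) g a b hgconc ?_ ?_
      (b - a).toNat a b _ _ le_rfl hab le_rfl le_rfl hga hgb
    · intro s hs
      have := (hmem _ _).mp (hSP s hs)
      exact ⟨this.1, this.2.2⟩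
    · intro α β h x hx
      have hx' := (hfg x hx).2.1
      rw [hP] at hx'
      have := linear_le_of_mem_hull S (-α) 1 β (fun s hs => by linarith [h s hs]) hx'
      simp only [Matrix.cons_val_zero, Matrix.cons_val_one] at this
      linarith
  have hTf : Trapezoid (fun x => -f x) a b := by
    refine trapezoid_of_hull S (fun s => s 0) (fun s => -s 1) (fun x => -f x) a b hfconv.neg ?_ ?_
      (b - a).toNat a b (-s₂ 1) (-s₄ 1) le_rfl hab le_rfl le_rfl (by simp [hfa]) (by simp [hfb])
    · intro s hs
      have := (hmem _ _).mp (hSP s hs)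
      refine ⟨this.1, ?_⟩
      push_cast
      exact neg_le_neg this.2.1
    · intro α β h x hx
      have hx' := (hfg x hx).1
      rw [hP] at hx'
      have := linear_le_of_mem_hull S (-α) (-1) β (fun s hs => by
        have := h s hs
        push_cast at this
        linarith) hx'
      simp only [Matrix.cons_val_zero, Matrix.cons_val_one] at this
      linarith
  have hfi : IntervalIntegrable f volume a b := by
    have := hTf.1.neg
    rwa [show (-fun x => -f x) = f from neg_neg f] at this
  -- the frontier of a convex set is null, so the area is that of the open region
  have harea : (volume P).toReal = (∫ x in (a : ℝ)..b, g x) - ∫ x in (a : ℝ)..b, f x := by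
    have hv1 : volume P = volume (interior P) :=
      le_antisymm (by
        calc volume P ≤ volume (interior P ∪ frontier P) := by
              refine measure_mono fun p hp => ?_
              rw [← closure_eq_interior_union_frontier]; exact subset_closure hp
          _ ≤ volume (interior P) + volume (frontier P) := measure_union_le _ _
          _ = volume (interior P) := by rw [hPconv.addHaar_frontier volume, add_zero])
        (measure_mono interior_subset)
    have hpre : interior P = MeasurableEquiv.finTwoArrow ⁻¹' regionBetween f g (Ioo (a : ℝ) b) := by
      ext p
      rw [hint]
      rfl
    have hii : ∀ {h : ℝ → ℝ}, IntervalIntegrable h volume a b → IntegrableOn h (Ioo (a : ℝ) b) :=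
      fun h => ((intervalIntegrable_iff_integrableOn_Ioo_of_le hab0).mp h)
    rw [hv1, hpre, (volume_preserving_finTwoArrow ℝ).measure_preimage_equiv,
      Measure.volume_eq_prod,
      volume_regionBetween_eq_integral (hii hfi) (hii hTg.1) measurableSet_Ioo
        (fun x hx => hle x (Ioo_subset_Icc_self hx)), ENNReal.toReal_ofReal
        (setIntegral_nonneg measurableSet_Ioo fun x hx => by
          simpa using hle x (Ioo_subset_Icc_self hx)),
      ← intervalIntegral.integral_sub hTg.1 hfi, intervalIntegral.integral_of_le hab0,
      integral_Ioc_eq_integral_Ioo]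
    rfl
  obtain ⟨hIfin, hI⟩ := ncard_columns {n : Fin 2 → ℤ | latticeMap n ∈ interior P}
    (Finset.Ioo a b) (fun x => Finset.Ioo ⌊f x⌋ ⌈g x⌉) (by
      intro n
      rw [mem_ofPred_eq, hint, Finset.mem_Ioo, Finset.mem_Ioo, Int.floor_lt, Int.lt_ceil]
      simp [latticeMap])
  obtain ⟨hNfin, hN⟩ := ncard_columns {n : Fin 2 → ℤ | latticeMap n ∈ P}
    (Finset.Icc a b) (fun x => Finset.Icc ⌈f x⌉ ⌊g x⌋) (by
      intro n
      rw [mem_ofPred_eq, ← vec_eta (latticeMap n), hmem, Finset.mem_Icc, Finset.mem_Icc,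
        Int.ceil_le, Int.le_floor]
      simp [latticeMap])
  have hB : ({n : Fin 2 → ℤ | latticeMap n ∈ frontier P}.ncard : ℝ)
      = ({n : Fin 2 → ℤ | latticeMap n ∈ P}.ncard : ℝ)
        - ({n : Fin 2 → ℤ | latticeMap n ∈ interior P}.ncard : ℝ) := by
    have hdiff : {n : Fin 2 → ℤ | latticeMap n ∈ frontier P}
        = {n : Fin 2 → ℤ | latticeMap n ∈ P} \ {n : Fin 2 → ℤ | latticeMap n ∈ interior P} := by
      ext n
      simp [hPc.isClosed.frontier_eq]
    have hsub : {n : Fin 2 → ℤ | latticeMap n ∈ interior P} ⊆ {n | latticeMap n ∈ P} :=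
      fun n hn => interior_subset (s := P) hn
    have := Set.ncard_sdiff_add_ncard_of_subset hsub hNfin
    rw [hdiff, ← this]
    push_cast; ring
  -- `f x < g x` on open columns and `f x ≤ g x` on closed ones exclude truncation in the counts
  have hcardI : ∀ x ∈ Finset.Ioo a b,
      ((Finset.Ioo ⌊f x⌋ ⌈g x⌉).card : ℝ) = ⌈g x⌉ - ⌊f x⌋ - 1 := by
    intro x hx
    rw [Finset.mem_Ioo] at hx
    have hl := hlt x ⟨by exact_mod_cast hx.1, by exact_mod_cast hx.2⟩
    have hl' : ⌊f x⌋ < ⌈g x⌉ := by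
      rw [Int.floor_lt]
      exact hl.trans_le (Int.le_ceil _)
    rw [Int.card_Ioo]
    exact_mod_cast Int.toNat_of_nonneg (a := ⌈g x⌉ - ⌊f x⌋ - 1) (by omega)
  have hcardN : ∀ x ∈ Finset.Icc a b,
      ((Finset.Icc ⌈f x⌉ ⌊g x⌋).card : ℝ) = ⌊g x⌋ + 1 - ⌈f x⌉ := by
    intro x hx
    rw [Finset.mem_Icc] at hx
    have hl := hle x ⟨by exact_mod_cast hx.1, by exact_mod_cast hx.2⟩
    have hl' : ⌈f x⌉ ≤ ⌊g x⌋ + 1 := by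
      rw [Int.ceil_le]
      push_cast
      exact hl.trans (Int.lt_floor_add_one _).le
    rw [Int.card_Icc]
    exact_mod_cast Int.toNat_of_nonneg (a := ⌊g x⌋ + 1 - ⌈f x⌉) (by omega)
  have hIR : ({n : Fin 2 → ℤ | latticeMap n ∈ interior P}.ncard : ℝ)
      = ∑ x ∈ Finset.Ioo a b, ((⌈g x⌉ : ℝ) - ⌊f x⌋ - 1) := by
    rw [hI, Nat.cast_sum]
    exact Finset.sum_congr rfl hcardI
  have hset : Finset.Icc a b = insert a (insert b (Finset.Ioo a b)) := by
    ext x; simp only [Finset.mem_insert, Finset.mem_Icc, Finset.mem_Ioo]; omega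
  have hNR : ({n : Fin 2 → ℤ | latticeMap n ∈ P}.ncard : ℝ)
      = (s₁ 1 + 1 - s₂ 1) + ((s₃ 1 + 1 - s₄ 1)
        + ∑ x ∈ Finset.Ioo a b, ((⌊g x⌋ : ℝ) + 1 - ⌈f x⌉)) := by
    rw [hN, Nat.cast_sum, Finset.sum_congr rfl hcardN, hset, Finset.sum_insert,
      Finset.sum_insert (by simp), hga, hgb, hfa, hfb]
    · simp
    · simp [hab.ne]
  have hTg2 := hTg.2
  have hTf2 := hTf.2
  simp only [intervalIntegral.integral_neg, lev_neg, Finset.sum_neg_distrib] at hTf2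
  rw [hga, hgb, lev_int, lev_int] at hTg2
  rw [hfa, hfb, lev_int, lev_int] at hTf2
  have hsum : ∑ x ∈ Finset.Ioo a b, ((⌈g x⌉ : ℝ) - ⌊f x⌋ - 1)
      + ∑ x ∈ Finset.Ioo a b, ((⌊g x⌋ : ℝ) + 1 - ⌈f x⌉)
      = 2 * (∑ x ∈ Finset.Ioo a b, lev (g x) - ∑ x ∈ Finset.Ioo a b, lev (f x)) := by
    rw [← Finset.sum_add_distrib, ← Finset.sum_sub_distrib, Finset.mul_sum]
    refine Finset.sum_congr rfl fun x _ => ?_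
    simp only [lev]; ring
  rw [hB, hIR, hNR, harea]
  linarith

/-- **Parametrized Pick formula**: for a convex lattice polygon `P = convexHull ℝ S` with
nonempty interior and any real `y`,
`(1+y)²·I + (1+y)·(B − v) + v = (1+y)²·A + ((1−y²)/2)·B + ((1+y)² − (1+y)·v + v)`,
where `A` is the area of `P`, `I` the number of interior lattice points, `B` the number of
boundary lattice points, and `v` the number of extreme points (vertices) of `P`. -/
theorem parametrized_pick_formula (S : Finset (Fin 2 → ℤ)) (P : Set (Fin 2 → ℝ))
    (hP : P = convexHull ℝ (latticeMap '' (S : Set (Fin 2 → ℤ))))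
    (hne : (interior P).Nonempty)
    (A : ℝ) (hA : A = (volume P).toReal)
    (I B v : ℕ)
    (hI : I = {n : Fin 2 → ℤ | latticeMap n ∈ interior P}.ncard)
    (hB : B = {n : Fin 2 → ℤ | latticeMap n ∈ frontier P}.ncard)
    (hv : v = (Set.extremePoints ℝ P).ncard) :
    ∀ y : ℝ,
      (1 + y) ^ 2 * (I : ℝ) + (1 + y) * ((B : ℝ) - (v : ℝ)) + (v : ℝ)
        = (1 + y) ^ 2 * A + ((1 - y ^ 2) / 2) * (B : ℝ)
          + ((1 + y) ^ 2 - (1 + y) * (v : ℝ) + (v : ℝ)) := by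
  intro y
  have h := pick_formula S P hP hne
  rw [← hA, ← hI, ← hB] at h
  linear_combination (1 + y) ^ 2 * h
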